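/- arXiv:1709.07259 — 2 statements merged into one kernel-verified Lean document; each statement's English description precedes it below -/
import Mathlib

section
/- Let φ ∈ (0,1). Let G be a random variable on ℕ with P[G = g] = (1−φ^h)^g · φ^h for all g ∈ ℕ (the number of nodes of height at most h preceding the first node of height exceeding h), and conditionally on G = g let C be binomially distributed with g trials and success probability p = φ^{h−1}(1−φ)/(1−φ^h) (the probability that a geometric height equals h given that it is at most h). Then the expectation of C equals (1−φ)/φ. -/
/-!
By Wald's identity `E[C] = p * E[G]`. With `q = φ ^ h` the mean of `G` is `(1 - q) / q`, whose
numerator cancels the denominator of `p`; what remains is `φ ^ (h - 1) * (1 - φ) / φ ^ h`.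
-/

theorem sum_range_mul_choose_mul_pow_mul_one_sub_pow {R : Type*} [CommRing R] (p : R) (n : ℕ) :
    ∑ k ∈ Finset.range (n + 1), (k : R) * (n.choose k : R) * p ^ k * (1 - p) ^ (n - k) =
      n * p := by
  simpa [bernsteinPolynomial, Polynomial.eval_finsetSum, mul_assoc] using
    congrArg (Polynomial.eval p) (bernsteinPolynomial.sum_smul R n)

section NormedField

variable {K : Type*} [NormedField K]

theorem hasSum_one_sub_pow_mul_mul_coe {q : K} (hq : ‖1 - q‖ < 1) :
    HasSum (fun n : ℕ ↦ ((1 - q) ^ n * q) * n) ((1 - q) / q) := by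
  have hq0 : q ≠ 0 := by
    rintro rfl
    simp at hq
  convert! (hasSum_coe_mul_geometric_of_norm_lt_one hq).mul_left q using 1
  · ext n
    ring
  · rw [sub_sub_cancel]
    field_simp

theorem hasSum_one_sub_pow_mul_mul_sum_choose {q : K} (hq : ‖1 - q‖ < 1) (p : K) :
    HasSum
      (fun n : ℕ ↦ ((1 - q) ^ n * q) *
        ∑ k ∈ Finset.range (n + 1), (k : K) * (n.choose k : K) * p ^ k * (1 - p) ^ (n - k))
      ((1 - q) / q * p) := by
  simp only [sum_range_mul_choose_mul_pow_mul_one_sub_pow, ← mul_assoc _ _ p]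
  exact (hasSum_one_sub_pow_mul_mul_coe hq).mul_right p

theorem expected_messages_at_height_general {φ : K} {h : ℕ} (hlt : ‖1 - φ ^ h‖ < 1)
    (hne : φ ^ h ≠ 1) :
    HasSum
      (fun g : ℕ ↦ ((1 - φ ^ h) ^ g * φ ^ h) *
        ∑ c ∈ Finset.range (g + 1),
          (c : K) * (g.choose c : K) * (φ ^ (h - 1) * (1 - φ) / (1 - φ ^ h)) ^ c *
            (1 - φ ^ (h - 1) * (1 - φ) / (1 - φ ^ h)) ^ (g - c))
      ((1 - φ) / φ) := by
  have hh : h ≠ 0 := fun h0 ↦ hne (by rw [h0, pow_zero])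
  have hφ : φ ≠ 0 := by
    rintro rfl
    simp [hh] at hlt
  have hsub : 1 - φ ^ h ≠ 0 := sub_ne_zero.mpr hne.symm
  have hcancel :
      (1 - φ ^ h) / φ ^ h * (φ ^ (h - 1) * (1 - φ) / (1 - φ ^ h)) = (1 - φ) / φ :=
    calc
      _ = φ ^ (h - 1) * (1 - φ) / φ ^ h := by field_simp
      _ = φ ^ (h - 1) * (1 - φ) / (φ ^ (h - 1) * φ) := by rw [pow_sub_one_mul hh]
      _ = (1 - φ) / φ := mul_div_mul_left _ _ (pow_ne_zero _ hφ)
  exact hcancel ▸ hasSum_one_sub_pow_mul_mul_sum_choose hlt _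

end NormedField

/-- Let `φ ∈ (0,1)` and let `h ≥ 1`. Let `G` be a random variable on `ℕ` with
`P[G = g] = (1 - φ^h)^g * φ^h` (the number of nodes of height at most `h` preceding
the first node of height exceeding `h`), and conditionally on `G = g` let `C` be
binomially distributed with `g` trials and success probability
`p = φ^(h-1) * (1 - φ) / (1 - φ^h)` (the probability that a geometric height equals `h`
given that it is at most `h`).  Then `E[C] = (1 - φ)/φ`, where
`E[C] = ∑_g P[G = g] * (∑_{c=0}^{g} c * choose g c * p^c * (1-p)^(g-c))`. -/
theorem expected_messages_at_height (φ : ℝ) (hφ : φ ∈ Set.Ioo (0 : ℝ) 1)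
    (h : ℕ) (hh : 1 ≤ h) :
    (∑' g : ℕ, ((1 - φ ^ h) ^ g * φ ^ h) *
      (∑ c ∈ Finset.range (g + 1),
        (c : ℝ) * (g.choose c : ℝ) * (φ ^ (h - 1) * (1 - φ) / (1 - φ ^ h)) ^ c *
          (1 - φ ^ (h - 1) * (1 - φ) / (1 - φ ^ h)) ^ (g - c))) = (1 - φ) / φ := by
  have hpos : 0 < φ ^ h := pow_pos hφ.1 h
  have hlt : φ ^ h < 1 := pow_lt_one₀ hφ.1.le hφ.2 (Nat.one_le_iff_ne_zero.mp hh)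
  have hnorm : ‖1 - φ ^ h‖ < 1 := by
    rw [Real.norm_of_nonneg (sub_nonneg.mpr hlt.le)]
    exact sub_lt_self 1 hpos
  exact (expected_messages_at_height_general hnorm hlt.ne).tsum_eq
end

section
/- Let ε ∈ (0,1/2], δ ∈ (0,1), p ∈ (0,1], and let k be a positive integer with p·k ≥ (3/ε²)·ln(2/δ). Let X be binomially distributed with ⌊(1−ε)k⌋ trials and success probability p, and let Y be binomially distributed with ⌈(1+ε)k⌉ trials and success probability p. Then P[X ≥ p·k] ≤ δ/2 and P[Y < p·k] ≤ δ/2. -/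
/-!
This is Chernoff's method with the same rate for both tails. The moment generating function of a
binomial variable is at most that of the Poisson variable with the same mean. Replacing the mean by
an upper bound `m` (if `t ≥ 0`) or a lower bound `m` (if `t ≤ 0`) and taking `t = log (a / m)`
bounds the tail at `a` by `exp (a - m - a * log (a / m))`.
For `a = p * k` the rounded numbers of trials allow `m = (1 - ε) * a` for the upper tail and
`m = (1 + ε) * a` for the lower one. The exponents become `a * (ε + log (1 - ε))` and
`a * (log (1 + ε) - ε)`, and both are at most `-a * ε ^ 2 / 3`.
-/

open MeasureTheory ProbabilityTheory Real
open scoped unitInterval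

section LogBounds

variable {x : ℝ}

lemma log_one_sub_le_neg_sub_sq_div_two (hx₀ : 0 ≤ x) (hx₁ : x < 1) :
    log (1 - x) ≤ -x - x ^ 2 / 2 := by
  have hseries := hasSum_pow_div_log_of_abs_lt_one (abs_lt.2 ⟨by linarith, hx₁⟩)
  have htrunc : x + x ^ 2 / 2 ≤ -log (1 - x) := by
    simpa [Finset.sum_range_succ, one_add_one_eq_two] using
      sum_le_hasSum (Finset.range 2) (fun _ _ ↦ by positivity) hseries
  linarith

lemma log_one_add_le_sub_sq_div_three (hx₀ : 0 ≤ x) (hx₁ : x ≤ 1 / 2) :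
    log (1 + x) ≤ x - x ^ 2 / 3 :=
  calc
    log (1 + x) ≤ sinh (log (1 + x)) := self_le_sinh_iff.2 (log_nonneg (by linarith))
    _ = (1 + x - (1 + x)⁻¹) / 2 := sinh_log (by positivity)
    _ ≤ x - x ^ 2 / 3 := by
      have hdiff : x - x ^ 2 / 3 - (1 + x - (1 + x)⁻¹) / 2 =
          x ^ 2 * (1 - 2 * x) / (6 * (1 + x)) := by
        field_simp
        ring
      have hnonneg : 0 ≤ x ^ 2 * (1 - 2 * x) / (6 * (1 + x)) :=
        div_nonneg (mul_nonneg (sq_nonneg x) (by linarith)) (by positivity)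
      linarith

end LogBounds

section BinomialTails

variable {n : ℕ} {p : I} {a m ε : ℝ}

lemma binomial_real_eq_sum_filter (n : ℕ) (p : I) (P : ℕ → Prop) [DecidablePred P] :
    Bin(n, p).real {c | P c} =
      ∑ c ∈ (Finset.range (n + 1)).filter P, (n.choose c : ℝ) * p ^ c * (1 - p) ^ (n - c) := by
  rw [← integral_indicator_one .of_discrete, integral_binomial, Finset.sum_filter,
    Nat.range_succ_eq_Iic]
  simp [Set.indicator_apply]

lemma mgf_binomial (n : ℕ) (p : I) (t : ℝ) :
    mgf (fun c : ℕ ↦ (c : ℝ)) Bin(n, p) t = (p * exp t + (1 - p)) ^ n := by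
  rw [mgf, integral_binomial, add_pow, Nat.range_succ_eq_Iic]
  refine Finset.sum_congr rfl fun c _ ↦ ?_
  rw [smul_eq_mul, mul_comm t, exp_nat_mul]
  ring

lemma mgf_binomial_le (n : ℕ) (p : I) (t : ℝ) :
    mgf (fun c : ℕ ↦ (c : ℝ)) Bin(n, p) t ≤ exp (n * p * (exp t - 1)) := by
  have hbase : 0 ≤ p * exp t + (1 - p) :=
    add_nonneg (mul_nonneg p.2.1 (exp_nonneg t)) (sub_nonneg.2 p.2.2)
  calc
    mgf (fun c : ℕ ↦ (c : ℝ)) Bin(n, p) t = (p * exp t + (1 - p)) ^ n := mgf_binomial n p t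
    _ ≤ exp (p * (exp t - 1)) ^ n := by
      gcongr
      linarith [add_one_le_exp (p * (exp t - 1))]
    _ = exp (n * p * (exp t - 1)) := by rw [← exp_nat_mul, mul_assoc]

-- `a / m - 1` is negative for the lower tail, where `m` bounds the mean from below.
lemma exp_mul_mgf_binomial_log_le (hm : 0 < m) (ha : 0 < a)
    (hmean : (n * p : ℝ) * (a / m - 1) ≤ m * (a / m - 1)) :
    exp (-log (a / m) * a) * mgf (fun c : ℕ ↦ (c : ℝ)) Bin(n, p) (log (a / m)) ≤
      exp (a - m - a * log (a / m)) :=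
  calc
    _ ≤ exp (-log (a / m) * a) * exp (n * p * (a / m - 1)) := by
      gcongr
      simpa only [exp_log (div_pos ha hm)] using mgf_binomial_le n p (log (a / m))
    _ ≤ exp (-log (a / m) * a) * exp (m * (a / m - 1)) := by gcongr ?_ * exp ?_
    _ = exp (a - m - a * log (a / m)) := by
      rw [← exp_add]
      congr 1
      field_simp
      ring

lemma binomial_real_ge_le_exp (hm : 0 < m) (hmean : (n * p : ℝ) ≤ m) (ham : m ≤ a) :
    Bin(n, p).real {c | a ≤ c} ≤ exp (a - m - a * log (a / m)) := by
  have hratio : 1 ≤ a / m := (one_le_div hm).2 ham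
  exact (measure_ge_le_exp_mul_mgf a (log_nonneg hratio) (integrable_binomial _)).trans <|
    exp_mul_mgf_binomial_log_le hm (hm.trans_le ham) <|
      mul_le_mul_of_nonneg_right hmean (sub_nonneg.2 hratio)

lemma binomial_real_le_le_exp (ha : 0 < a) (ham : a ≤ m) (hmean : m ≤ n * p) :
    Bin(n, p).real {c | c ≤ a} ≤ exp (a - m - a * log (a / m)) := by
  have hm : 0 < m := ha.trans_le ham
  have hratio : a / m ≤ 1 := (div_le_one hm).2 ham
  exact (measure_le_le_exp_mul_mgf a (log_nonpos (by positivity) hratio)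
    (integrable_binomial _)).trans <|
      exp_mul_mgf_binomial_log_le hm ha <|
        mul_le_mul_of_nonpos_right hmean (sub_nonpos.2 hratio)

lemma binomial_real_ge_le_exp_neg_sq (ha : 0 < a) (hε₀ : 0 ≤ ε) (hε₁ : ε < 1)
    (hmean : (n * p : ℝ) ≤ (1 - ε) * a) :
    Bin(n, p).real {c | a ≤ c} ≤ exp (-(a * (ε ^ 2 / 2))) := by
  have hpos : 0 < 1 - ε := sub_pos.2 hε₁
  refine (binomial_real_ge_le_exp (mul_pos hpos ha) hmean (by nlinarith)).trans ?_
  rw [div_mul_cancel_right₀ ha.ne', log_inv]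
  gcongr
  linarith [mul_le_mul_of_nonneg_left (log_one_sub_le_neg_sub_sq_div_two hε₀ hε₁) ha.le]

lemma binomial_real_le_le_exp_neg_sq (ha : 0 < a) (hε₀ : 0 ≤ ε) (hε₁ : ε ≤ 1 / 2)
    (hmean : (1 + ε) * a ≤ n * p) :
    Bin(n, p).real {c | c ≤ a} ≤ exp (-(a * (ε ^ 2 / 3))) := by
  refine (binomial_real_le_le_exp ha (by nlinarith) hmean).trans ?_
  rw [div_mul_cancel_right₀ ha.ne', log_inv]
  gcongr
  linarith [mul_le_mul_of_nonneg_left (log_one_add_le_sub_sq_div_three hε₀ hε₁) ha.le]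

end BinomialTails

/-- **concentration for Approximate k-Select, Theorem 4.5.**
Let `ε ∈ (0,1/2]`, `δ ∈ (0,1)`, `p ∈ (0,1]`, and let `k` be a positive integer
with `p·k ≥ (3/ε²)·ln(2/δ)`.  Let `X` be binomially distributed with `⌊(1-ε)k⌋`
trials and success probability `p`, and let `Y` be binomially distributed with
`⌈(1+ε)k⌉` trials and success probability `p`.  Then `P[X ≥ p·k] ≤ δ/2` and
`P[Y < p·k] ≤ δ/2`. -/
theorem kselect_sampling_concentration
    (ε δ p : ℝ) (hε : ε ∈ Set.Ioc (0 : ℝ) (1 / 2)) (hδ : δ ∈ Set.Ioo (0 : ℝ) 1)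
    (hp : p ∈ Set.Ioc (0 : ℝ) 1)
    (k : ℕ) (hk : 0 < k) (hpk : (3 / ε ^ 2) * Real.log (2 / δ) ≤ p * k) :
    (∑ c ∈ (Finset.range (⌊(1 - ε) * (k : ℝ)⌋₊ + 1)).filter
        (fun c : ℕ => p * k ≤ (c : ℝ)),
        ((⌊(1 - ε) * (k : ℝ)⌋₊).choose c : ℝ) * p ^ c *
          (1 - p) ^ (⌊(1 - ε) * (k : ℝ)⌋₊ - c)) ≤ δ / 2 ∧
    (∑ c ∈ (Finset.range (⌈(1 + ε) * (k : ℝ)⌉₊ + 1)).filter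
        (fun c : ℕ => (c : ℝ) < p * k),
        ((⌈(1 + ε) * (k : ℝ)⌉₊).choose c : ℝ) * p ^ c *
          (1 - p) ^ (⌈(1 + ε) * (k : ℝ)⌉₊ - c)) ≤ δ / 2 := by
  obtain ⟨hε₀, hε₁⟩ := hε
  have ha : 0 < p * k := mul_pos hp.1 (Nat.cast_pos.2 hk)
  have hfail : exp (-(p * k * (ε ^ 2 / 3))) ≤ δ / 2 := by
    have hδ₀ : 0 < 2 / δ := div_pos two_pos hδ.1
    have hlog : log (2 / δ) ≤ p * k * (ε ^ 2 / 3) := by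
      rw [div_mul_eq_mul_div, div_le_iff₀ (by positivity)] at hpk
      linarith
    rw [exp_neg, ← inv_div 2 δ]
    exact inv_anti₀ hδ₀ ((log_le_iff_le_exp hδ₀).1 hlog)
  lift p to I using ⟨hp.1.le, hp.2⟩
  rw [← binomial_real_eq_sum_filter, ← binomial_real_eq_sum_filter]
  constructor
  · have hmean : (⌊(1 - ε) * (k : ℝ)⌋₊ * p : ℝ) ≤ (1 - ε) * (p * k) := by
      have hfloor := Nat.floor_le (mul_nonneg (by linarith : 0 ≤ 1 - ε) k.cast_nonneg)
      linarith [mul_le_mul_of_nonneg_right hfloor p.2.1]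
    refine (binomial_real_ge_le_exp_neg_sq ha hε₀.le (by linarith) hmean).trans ?_
    exact le_trans (by gcongr; norm_num) hfail
  · have hmean : (1 + ε) * (p * k) ≤ (⌈(1 + ε) * (k : ℝ)⌉₊ * p : ℝ) := by
      linarith [mul_le_mul_of_nonneg_right (Nat.le_ceil ((1 + ε) * (k : ℝ))) p.2.1]
    refine (measureReal_mono (Set.ofPred_subset_ofPred.2 fun _ hc ↦ hc.le)).trans ?_
    exact (binomial_real_le_le_exp_neg_sq ha hε₀.le hε₁ hmean).trans hfail
end
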